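/- Let f be a real number and define Γ(τ) := −f·τ / (1 − f·τ²/2). Then Γ(0) = 0 and Γ'(0) = −f, and at every τ ∈ ℝ with 1 − f·τ²/2 ≠ 0 the function Γ is twice differentiable and satisfies Γ''(τ) + 3·Γ(τ)·Γ'(τ) + Γ(τ)³ = 0. -/

import Mathlib

/-!
The function `Γ` is the logarithmic derivative `u' / u` of `u τ = 1 - f τ² / 2`. For any `u`, the
logarithmic derivative `Γ` satisfies `u'' / u = Γ' + Γ²`, and differentiating once more gives
`u''' / u = Γ'' + 3 Γ Γ' + Γ³`. The equation for `Γ` thus linearises to `u''' = 0`, which holds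
because `u` is quadratic.
-/

open Topology

section LogDeriv

variable {𝕜 : Type*} [NontriviallyNormedField 𝕜] {u : 𝕜 → 𝕜} {x : 𝕜}

theorem hasDerivAt_logDeriv (hu : DifferentiableAt 𝕜 u x) (hu' : DifferentiableAt 𝕜 (deriv u) x)
    (hx : u x ≠ 0) :
    HasDerivAt (logDeriv u) (deriv (deriv u) x / u x - logDeriv u x ^ 2) x := by
  refine (hu'.hasDerivAt.div hu.hasDerivAt hx).congr_deriv ?_
  rw [logDeriv_apply]
  field_simp

theorem hasDerivAt_deriv_logDeriv (hu : ∀ᶠ y in 𝓝 x, DifferentiableAt 𝕜 u y)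
    (hu' : ∀ᶠ y in 𝓝 x, DifferentiableAt 𝕜 (deriv u) y)
    (hu'' : DifferentiableAt 𝕜 (deriv (deriv u)) x) (hx : u x ≠ 0) :
    HasDerivAt (deriv (logDeriv u))
      (deriv (deriv (deriv u)) x / u x
        - 3 * logDeriv u x * deriv (logDeriv u) x - logDeriv u x ^ 3) x := by
  have hux := hu.self_of_nhds
  have hΓ := hasDerivAt_logDeriv hux hu'.self_of_nhds hx
  have riccati_near : deriv (logDeriv u) =ᶠ[𝓝 x]
      fun y => deriv (deriv u) y / u y - logDeriv u y ^ 2 := by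
    filter_upwards [hu, hu', hux.continuousAt.eventually_ne hx] with y hy hy' hy₀
    exact (hasDerivAt_logDeriv hy hy' hy₀).deriv
  have deriv_riccati :=
    (hu''.hasDerivAt.fun_div hux.hasDerivAt hx).fun_sub (hΓ.fun_pow 2)
  refine (deriv_riccati.congr_of_eventuallyEq riccati_near).congr_deriv ?_
  simp only [hΓ.deriv, logDeriv_apply, Nat.cast_ofNat, Nat.reduceSub, pow_one]
  field_simp
  ring

end LogDeriv

section Quadratic

variable {𝕜 : Type*} [NontriviallyNormedField 𝕜] [NeZero (2 : 𝕜)] (f : 𝕜)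

theorem hasDerivAt_one_sub_mul_sq_div_two (τ : 𝕜) :
    HasDerivAt (fun t : 𝕜 => 1 - f * t ^ 2 / 2) (-f * τ) τ := by
  refine ((((hasDerivAt_pow 2 τ).const_mul f).div_const 2).const_sub 1).congr_deriv ?_
  field_simp
  simp

theorem deriv_one_sub_mul_sq_div_two :
    deriv (fun t : 𝕜 => 1 - f * t ^ 2 / 2) = fun t => -f * t :=
  funext fun τ => (hasDerivAt_one_sub_mul_sq_div_two f τ).deriv

theorem logDeriv_one_sub_mul_sq_div_two (τ : 𝕜) :
    logDeriv (fun t : 𝕜 => 1 - f * t ^ 2 / 2) τ = -f * τ / (1 - f * τ ^ 2 / 2) := by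
  rw [logDeriv_apply, deriv_one_sub_mul_sq_div_two]

theorem deriv_deriv_one_sub_mul_sq_div_two :
    deriv (deriv fun t : 𝕜 => 1 - f * t ^ 2 / 2) = fun _ => -f := by
  rw [deriv_one_sub_mul_sq_div_two]
  exact funext fun _ => (hasDerivAt_const_mul (-f)).deriv

end Quadratic

theorem stmt_11_general {𝕜 : Type*} [NontriviallyNormedField 𝕜] [NeZero (2 : 𝕜)] (f : 𝕜)
    (Γ : 𝕜 → 𝕜) (hΓ : ∀ τ : 𝕜, Γ τ = -f * τ / (1 - f * τ ^ 2 / 2)) :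
    Γ 0 = 0 ∧ deriv Γ 0 = -f ∧
    ∀ τ : 𝕜, 1 - f * τ ^ 2 / 2 ≠ 0 →
      DifferentiableAt 𝕜 Γ τ ∧ DifferentiableAt 𝕜 (deriv Γ) τ ∧
      deriv (deriv Γ) τ + 3 * Γ τ * deriv Γ τ + (Γ τ) ^ 3 = 0 := by
  set u : 𝕜 → 𝕜 := fun t => 1 - f * t ^ 2 / 2 with hu_def
  obtain rfl : Γ = logDeriv u :=
    funext fun τ => (hΓ τ).trans (logDeriv_one_sub_mul_sq_div_two f τ).symm
  have hu : Differentiable 𝕜 u := fun τ =>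
    (hasDerivAt_one_sub_mul_sq_div_two f τ).differentiableAt
  have hu' : Differentiable 𝕜 (deriv u) := by
    rw [deriv_one_sub_mul_sq_div_two]
    fun_prop
  have hu'' : deriv (deriv u) = fun _ => -f := deriv_deriv_one_sub_mul_sq_div_two f
  have hΓ₀ : logDeriv u 0 = 0 := by simp [hΓ]
  refine ⟨hΓ₀, ?_, fun τ hτ => ?_⟩
  · rw [(hasDerivAt_logDeriv (hu 0) (hu' 0) (by simp [hu_def])).deriv, hu'', hΓ₀]
    simp [hu_def]
  · have hderiv₂ := hasDerivAt_deriv_logDeriv (.of_forall hu) (.of_forall hu')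
      (by rw [hu'']; fun_prop) hτ
    refine ⟨(hasDerivAt_logDeriv (hu τ) (hu' τ) hτ).differentiableAt,
      hderiv₂.differentiableAt, ?_⟩
    rw [hderiv₂.deriv, hu'', deriv_const, zero_div]
    ring

theorem stmt_11 (f : ℝ) (Γ : ℝ → ℝ)
    (hΓ : ∀ τ : ℝ, Γ τ = -f * τ / (1 - f * τ^2 / 2)) :
    Γ 0 = 0 ∧ deriv Γ 0 = -f ∧
    ∀ τ : ℝ, 1 - f * τ^2 / 2 ≠ 0 →
      DifferentiableAt ℝ Γ τ ∧ DifferentiableAt ℝ (deriv Γ) τ ∧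
      deriv (deriv Γ) τ + 3 * Γ τ * deriv Γ τ + (Γ τ)^3 = 0 :=
  stmt_11_general f Γ hΓ
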